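/- For every positive integer n, the strict inequalities p_{n+1} < log₂(2/θ(n)) < p_{n+1} + 1 hold. -/

import Mathlib

/-!
By inclusion–exclusion, expanding `1 / (2 ^ d - 1) = ∑_{k ≥ 1} 2 ^ (-d k)` gives
`θ(n) + 1/2 = ∑ 2 ^ (-m)` over the positive integers `m` coprime to `p_n#` (`hasSum_theta`).
Such an `m` is either `1`, which contributes `1/2`, or at least `p = p_{n+1}`. Both `p` and `p ^ 2`
occur, so `θ(n) > 2 ^ (-p)`, while the even number `p + 1` does not, so
`θ(n) < ∑_{m ≥ p} 2 ^ (-m) = 2 ^ (1 - p)`. Taking logarithms gives the two bounds.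
-/

open scoped BigOperators

/-- `nthPrime k` is the k-th prime with 1-based indexing: p₁ = 2, p₂ = 3, ... -/
noncomputable def nthPrime (k : ℕ) : ℕ := Nat.nth Nat.Prime (k - 1)

/-- `primorialN n` is `p_n# = p₁ ⬝ p₂ ⋯ p_n`, the product of the first `n` primes. -/
noncomputable def primorialN (n : ℕ) : ℕ := ∏ i ∈ Finset.range n, Nat.nth Nat.Prime i

/-- `theta n = -1/2 + ∑_{d ∣ p_n#} μ(d)/(2^d - 1)`. -/
noncomputable def theta (n : ℕ) : ℝ :=
  -1/2 + ∑ d ∈ (primorialN n).divisors,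
    ((ArithmeticFunction.moebius d : ℤ) : ℝ) / (2 ^ d - 1)


/-- The summand `2 ^ (-m)` restricted to the positive integers `m` coprime to `N`. -/
noncomputable def coprimeTerm (N m : ℕ) : ℝ :=
  if m ≠ 0 ∧ Nat.Coprime m N then (1 / 2) ^ m else 0

lemma hasSum_multiples {d : ℕ} (hd : d ≠ 0) :
    HasSum (fun m : ℕ => if m ≠ 0 ∧ d ∣ m then (1 / 2 : ℝ) ^ m else 0) (1 / (2 ^ d - 1)) := by
  have hinj : Function.Injective (fun k : ℕ => d * (k + 1)) := fun a b h => by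
    have := Nat.eq_of_mul_eq_mul_left (Nat.pos_of_ne_zero hd) h
    omega
  rw [← hinj.hasSum_iff]
  · have h1 : (1 : ℝ) < 2 ^ d := one_lt_pow₀ (by norm_num) hd
    have h2 : (1 / 2 : ℝ) ^ d < 1 := pow_lt_one₀ (by norm_num) (by norm_num) hd
    have h := (hasSum_geometric_of_lt_one (by positivity) h2).mul_left ((1 / 2 : ℝ) ^ d)
    have h5 : (2 : ℝ) ^ d * (1 / 2) ^ d = 1 := by rw [← mul_pow]; norm_num
    have hval : (1 : ℝ) / (2 ^ d - 1) = (1 / 2) ^ d * (1 - (1 / 2) ^ d)⁻¹ := by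
      rw [← div_eq_mul_inv, div_eq_div_iff (by linarith) (by linarith)]
      linarith
    rw [hval]
    refine Eq.mpr (congrArg (fun f => HasSum f _) (funext fun k => ?_)) h
    simp [hd, pow_mul, pow_succ, mul_comm]
  · rintro m hm
    rw [if_neg]
    rintro ⟨hm0, k, rfl⟩
    refine hm ⟨k - 1, ?_⟩
    have : k ≠ 0 := by rintro rfl; simp at hm0
    simp only
    congr 1
    omega

/-- Möbius inversion as a sieve: the divisors of `N` that divide `m` are those of `gcd m N`. -/
lemma sum_moebius_dvd {N m : ℕ} (hN : N ≠ 0) :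
    ∑ d ∈ N.divisors, (if d ∣ m then ((ArithmeticFunction.moebius d : ℤ) : ℝ) else 0) =
      if Nat.Coprime m N then 1 else 0 := by
  rw [← Finset.sum_filter]
  have hf : N.divisors.filter (fun d => d ∣ m) = (Nat.gcd m N).divisors := by
    ext d
    simp [Nat.dvd_gcd_iff, hN, and_comm]
  have h := congrArg (fun f : ArithmeticFunction ℤ => f (Nat.gcd m N))
    ArithmeticFunction.moebius_mul_coe_zeta
  simp only [ArithmeticFunction.coe_mul_zeta_apply,
    ArithmeticFunction.one_apply] at h
  rw [hf, ← Int.cast_sum, h]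
  simp [Nat.Coprime]

lemma primorialN_ne_zero (n : ℕ) : primorialN n ≠ 0 :=
  Finset.prod_ne_zero_iff.mpr fun i _ => (Nat.prime_nth_prime i).ne_zero

lemma hasSum_theta (n : ℕ) : HasSum (coprimeTerm (primorialN n)) (theta n + 1 / 2) := by
  have h : HasSum (fun m : ℕ => ∑ d ∈ (primorialN n).divisors,
      ((ArithmeticFunction.moebius d : ℤ) : ℝ) *
        (if m ≠ 0 ∧ d ∣ m then (1 / 2 : ℝ) ^ m else 0))
      (∑ d ∈ (primorialN n).divisors,
        ((ArithmeticFunction.moebius d : ℤ) : ℝ) * (1 / (2 ^ d - 1))) :=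
    hasSum_sum fun d hd => (hasSum_multiples (Nat.pos_of_mem_divisors hd).ne').mul_left _
  convert h using 1
  · funext m
    by_cases hm : m = 0
    · simp [coprimeTerm, hm]
    · have := congrArg (fun x : ℝ => x * (1 / 2 : ℝ) ^ m)
        (sum_moebius_dvd (m := m) (primorialN_ne_zero n))
      simp only [Finset.sum_mul, ite_mul, zero_mul, one_mul] at this
      simp only [coprimeTerm, hm, ne_eq, not_false_eq_true, true_and, mul_ite, mul_zero]
      exact this.symm
  · simp only [theta, mul_one_div]
    ring

lemma coprime_primorialN_iff {n m : ℕ} :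
    Nat.Coprime m (primorialN n) ↔ ∀ i < n, ¬ Nat.nth Nat.Prime i ∣ m := by
  simp only [primorialN, Nat.coprime_prod_right_iff, Finset.mem_range]
  refine forall₂_congr fun i _ => ?_
  rw [Nat.coprime_comm, (Nat.prime_nth_prime i).coprime_iff_not_dvd]

lemma nth_prime_coprime_primorialN (n : ℕ) :
    Nat.Coprime (Nat.nth Nat.Prime n) (primorialN n) := by
  rw [coprime_primorialN_iff]
  intro i hi hdvd
  rw [Nat.prime_dvd_prime_iff_eq (Nat.prime_nth_prime i) (Nat.prime_nth_prime n)] at hdvd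
  exact hi.ne (Nat.nth_injective Nat.infinite_setOfPred_prime hdvd)

/-- A number strictly between `1` and `p_{n+1}` has a prime factor among `p_1, …, p_n`. -/
lemma not_coprime_of_lt {n m : ℕ} (h1 : m ≠ 1) (h0 : m ≠ 0) (hm : m < Nat.nth Nat.Prime n) :
    ¬ Nat.Coprime m (primorialN n) := by
  rw [coprime_primorialN_iff]
  push Not
  have hp := Nat.minFac_prime h1
  have hlt : m.minFac < Nat.nth Nat.Prime n :=
    (Nat.minFac_le (Nat.pos_of_ne_zero h0)).trans_lt hm
  rw [← Nat.nth_count hp] at hlt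
  refine ⟨_, (Nat.nth_lt_nth Nat.infinite_setOfPred_prime).mp hlt, ?_⟩
  rw [Nat.nth_count hp]
  exact m.minFac_dvd

lemma three_le_nth_prime {n : ℕ} (hn : 0 < n) : 3 ≤ Nat.nth Nat.Prime n := by
  have h : Nat.nth Nat.Prime 0 < Nat.nth Nat.Prime n :=
    (Nat.nth_lt_nth Nat.infinite_setOfPred_prime).mpr hn
  have := (Nat.prime_nth_prime 0).two_le
  omega

lemma hasSum_theta_tail {n : ℕ} (hn : 0 < n) :
    HasSum (fun m => coprimeTerm (primorialN n) (m + Nat.nth Nat.Prime n)) (theta n) := by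
  have hp := three_le_nth_prime hn
  have h := (hasSum_nat_add_iff' (Nat.nth Nat.Prime n)).mpr (hasSum_theta n)
  have hs : ∑ i ∈ Finset.range (Nat.nth Nat.Prime n), coprimeTerm (primorialN n) i = 1 / 2 := by
    rw [Finset.sum_eq_single_of_mem 1 (Finset.mem_range.mpr (by omega))]
    · simp [coprimeTerm]
    · intro m hm h1
      rw [coprimeTerm, if_neg]
      rintro ⟨h0, hc⟩
      exact not_coprime_of_lt h1 h0 (Finset.mem_range.mp hm) hc
  rwa [hs, add_sub_cancel_right] at h

lemma coprimeTerm_nonneg (N m : ℕ) : 0 ≤ coprimeTerm N m := by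
  unfold coprimeTerm
  split_ifs <;> positivity

lemma theta_gt {n : ℕ} (hn : 0 < n) : (1 / 2 : ℝ) ^ Nat.nth Nat.Prime n < theta n := by
  set p := Nat.nth Nat.Prime n with hpdef
  have hp : 3 ≤ p := three_le_nth_prime hn
  have hc : Nat.Coprime p (primorialN n) := nth_prime_coprime_primorialN n
  have h := sum_le_hasSum {0, p ^ 2 - p} (fun i _ => coprimeTerm_nonneg _ _)
    (hasSum_theta_tail hn)
  have hlt : p < p ^ 2 := by nlinarith
  rw [Finset.sum_pair (by omega), ← hpdef, Nat.sub_add_cancel hlt.le, zero_add, coprimeTerm,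
    coprimeTerm, if_pos ⟨by omega, hc⟩, if_pos ⟨by positivity, hc.pow_left 2⟩] at h
  have : (0 : ℝ) < (1 / 2) ^ (p ^ 2) := by positivity
  linarith

lemma theta_lt {n : ℕ} (hn : 0 < n) : theta n < 2 * (1 / 2 : ℝ) ^ Nat.nth Nat.Prime n := by
  set p := Nat.nth Nat.Prime n with hpdef
  have hp : 3 ≤ p := three_le_nth_prime hn
  have hg := hasSum_geometric_two.mul_right ((1 / 2 : ℝ) ^ p)
  refine hasSum_lt (i := 1) (fun m => ?_) ?_ (hasSum_theta_tail hn) hg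
  · rw [← pow_add]
    unfold coprimeTerm
    split_ifs
    · exact le_rfl
    · positivity
    -- Strictness comes from the index of `p + 1`, which is even and hence not coprime to `p_n#`.
  · have h2 : 2 ∣ 1 + p := by
      have := (Nat.prime_nth_prime n).eq_two_or_odd
      rw [← hpdef] at this
      omega
    rw [coprimeTerm, if_neg]
    · positivity
    · rintro ⟨-, hc⟩
      refine coprime_primorialN_iff.mp hc 0 hn ?_
      rwa [Nat.nth_prime_zero_eq_two]

/-- For every positive integer `n`,
`p_{n+1} < log₂(2/θ(n)) < p_{n+1} + 1`. -/
theorem log_theta_bounds (n : ℕ) (hn : 0 < n) :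
    (nthPrime (n + 1) : ℝ) < Real.logb 2 (2 / theta n) ∧
      Real.logb 2 (2 / theta n) < (nthPrime (n + 1) : ℝ) + 1 := by
  have hlo := theta_gt hn
  have hhi := theta_lt hn
  simp only [nthPrime, Nat.add_sub_cancel]
  set p := Nat.nth Nat.Prime n
  have hpow : (0 : ℝ) < (1 / 2) ^ p := by positivity
  have hθ : 0 < theta n := hpow.trans hlo
  have hinv : (2 : ℝ) ^ p * (1 / 2) ^ p = 1 := by rw [← mul_pow]; norm_num
  have h2p : (0 : ℝ) < 2 ^ p := by positivity
  constructor
  · rw [Real.lt_logb_iff_rpow_lt (by norm_num) (by positivity), Real.rpow_natCast,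
      lt_div_iff₀ hθ]
    nlinarith
  · rw [Real.logb_lt_iff_lt_rpow (by norm_num) (by positivity), Real.rpow_add_one (by norm_num),
      Real.rpow_natCast, div_lt_iff₀ hθ]
    nlinarith
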